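/- For every nonnegative integer n and complex number x: sum over k from 0 to n of ((3x)_k (1-3x)_k (-n)_k)/(k! (1/2)_k (-1-3n)_k) * (3/4)^k equals 3x * ((1+x)_n (1-x)_n)/((2/3)_n (4/3)_n) + (1-3x) * ((2/3+x)_n (4/3-x)_n)/((2/3)_n (4/3)_n). -/

import Mathlib

/-- Pochhammer symbol (rising factorial) `(a)_k`. -/
noncomputable def poch (a : ℂ) (k : ℕ) : ℂ := ∏ j ∈ Finset.range k, (a + j)

theorem poch_succ (a : ℂ) (k : ℕ) : poch a (k + 1) = poch a k * (a + k) := by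
  simp [poch, Finset.prod_range_succ]

theorem poch_mul_add (a : ℂ) (k : ℕ) : poch a k * (a + k) = a * poch (a + 1) k := by
  rw [← poch_succ]
  simp only [poch, Finset.prod_range_succ', Nat.cast_zero, add_zero, Nat.cast_add, Nat.cast_one]
  rw [mul_comm]
  congr 1
  exact Finset.prod_congr rfl fun j _ => by ring

theorem poch_ne_zero {a : ℂ} {k : ℕ} (h : ∀ j < k, a + j ≠ 0) : poch a k ≠ 0 :=
  Finset.prod_ne_zero_iff.mpr fun j hj => h j (Finset.mem_range.mp hj)

theorem poch_ne_zero_of_pos {r : ℝ} (hr : 0 < r) (k : ℕ) : poch (r : ℂ) k ≠ 0 :=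
  poch_ne_zero fun j _ => by
    have h : r + j ≠ 0 := by positivity
    exact_mod_cast h

theorem poch_neg_natCast_ne_zero {m k : ℕ} (h : k ≤ m) : poch (-(m : ℂ)) k ≠ 0 :=
  poch_ne_zero fun j hj => by
    rw [neg_add_eq_sub, sub_ne_zero]
    exact_mod_cast (hj.trans_le h).ne

theorem poch_neg_natCast_eq_zero {m k : ℕ} (h : m < k) : poch (-(m : ℂ)) k = 0 :=
  Finset.prod_eq_zero (Finset.mem_range.mpr h) (by simp)

/-- The hypergeometric term summed in Gosper's identity, with complex parameter `N`. -/
noncomputable def gosperTerm (N x : ℂ) (k : ℕ) : ℂ :=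
  (poch (3 * x) k * poch (1 - 3 * x) k * poch (-N) k) /
    ((Nat.factorial k : ℂ) * poch (1 / 2) k * poch (-1 - 3 * N) k) * (3 / 4 : ℂ) ^ k

/-- The term of which `gosperTerm N`, `gosperTerm (N + 1)` and `gosperTerm (N + 2)` are all
polynomial multiples. -/
noncomputable def gosperBase (N x : ℂ) (k : ℕ) : ℂ :=
  (poch (3 * x) k * poch (1 - 3 * x) k * poch (-(N + 2)) k) /
    ((Nat.factorial k : ℂ) * poch (1 / 2) k * poch (-1 - 3 * N) k) * (3 / 4 : ℂ) ^ k

/-- The right-hand side of Gosper's identity. -/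
noncomputable def gosperClosed (n : ℕ) (x : ℂ) : ℂ :=
  3 * x * ((poch (1 + x) n * poch (1 - x) n) / (poch (2 / 3) n * poch (4 / 3) n))
    + (1 - 3 * x) *
        ((poch (2 / 3 + x) n * poch (4 / 3 - x) n) / (poch (2 / 3) n * poch (4 / 3) n))

/-- The polynomial factor of the Zeilberger certificate. -/
noncomputable def gosperCert (N x k : ℂ) : ℂ :=
  4 * (k ^ 3 - (9 * N + 11) * k ^ 2 + (9 * N + 27 * x ^ 2 - 9 * x + 10) * k
    + (-27 * N * x ^ 2 + 9 * N * x + 6 * N - 54 * x ^ 2 + 18 * x + 6)) / 729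

theorem poch_half_ne_zero (k : ℕ) : poch (1 / 2) k ≠ 0 := by
  simpa using poch_ne_zero_of_pos (r := 1 / 2) (by norm_num) k

theorem poch_two_thirds_ne_zero (k : ℕ) : poch (2 / 3) k ≠ 0 := by
  simpa using poch_ne_zero_of_pos (r := 2 / 3) (by norm_num) k

theorem poch_four_thirds_ne_zero (k : ℕ) : poch (4 / 3) k ≠ 0 := by
  simpa using poch_ne_zero_of_pos (r := 4 / 3) (by norm_num) k

theorem poch_mul_shift_three (a : ℂ) (k : ℕ) :
    poch a k * ((a + k) * (a + 1 + k) * (a + 2 + k)) =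
      a * (a + 1) * (a + 2) * poch (a + 3) k := by
  have h₀ := poch_mul_add a k
  have h₁ := poch_mul_add (a + 1) k
  have h₂ := poch_mul_add (a + 2) k
  rw [show a + 1 + 1 = a + 2 by ring] at h₁
  rw [show a + 2 + 1 = a + 3 by ring] at h₂
  linear_combination (a + 1 + k) * (a + 2 + k) * h₀ + a * (a + 2 + k) * h₁ + a * (a + 1) * h₂

theorem gosperTerm_eq_base (N x : ℂ) (k : ℕ) :
    (N + 1) * (N + 2) * gosperTerm N x k = (N + 1 - k) * (N + 2 - k) * gosperBase N x k := by
  have h₀ := poch_mul_add (-(N + 2)) k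
  have h₁ := poch_mul_add (-(N + 1)) k
  rw [show -(N + 2) + 1 = -(N + 1) by ring] at h₀
  rw [show -(N + 1) + 1 = -N by ring] at h₁
  have h : (N + 1) * (N + 2) * poch (-N) k =
      (N + 1 - k) * (N + 2 - k) * poch (-(N + 2)) k := by
    linear_combination -(-(N + 1) + k) * h₀ + (N + 2) * h₁
  unfold gosperTerm gosperBase
  linear_combination (poch (3 * x) k * poch (1 - 3 * x) k /
    ((Nat.factorial k : ℂ) * poch (1 / 2) k * poch (-1 - 3 * N) k) * (3 / 4 : ℂ) ^ k) * h

theorem gosperTerm_add_one_eq_base {N : ℂ} (x : ℂ) {k : ℕ}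
    (h₀ : poch (-1 - 3 * N) k ≠ 0) (h₁ : poch (-1 - 3 * (N + 1)) k ≠ 0) :
    (N + 2) * ((3 * N + 4) * (3 * N + 3) * (3 * N + 2)) * gosperTerm (N + 1) x k =
      (N + 2 - k) * ((3 * N + 4 - k) * (3 * N + 3 - k) * (3 * N + 2 - k)) *
        gosperBase N x k := by
  have hn := poch_mul_add (-(N + 2)) k
  have hd := poch_mul_shift_three (-1 - 3 * (N + 1)) k
  rw [show -(N + 2) + 1 = -(N + 1) by ring] at hn
  rw [show -1 - 3 * (N + 1) + 3 = -1 - 3 * N by ring] at hd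
  unfold gosperTerm gosperBase
  generalize poch (-1 - 3 * (N + 1)) k = d₁ at *
  generalize poch (-1 - 3 * N) k = d₀ at *
  generalize poch (-(N + 1)) k = e₁ at *
  generalize poch (-(N + 2)) k = e₂ at *
  generalize poch (1 / 2) k = c at *
  generalize poch (3 * x) k = u at *
  generalize poch (1 - 3 * x) k = v at *
  generalize (3 / 4 : ℂ) ^ k = p at *
  have h : (N + 2) * ((3 * N + 4) * (3 * N + 3) * (3 * N + 2)) * e₁ * d₀ =
      (N + 2 - k) * ((3 * N + 4 - k) * (3 * N + 3 - k) * (3 * N + 2 - k)) * e₂ * d₁ := by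
    linear_combination (N + 2) * e₁ * hd +
      ((3 * N + 4 - k) * (3 * N + 3 - k) * (3 * N + 2 - k)) * d₁ * hn
  have h' : (N + 2) * ((3 * N + 4) * (3 * N + 3) * (3 * N + 2)) * (e₁ / d₁) =
      (N + 2 - k) * ((3 * N + 4 - k) * (3 * N + 3 - k) * (3 * N + 2 - k)) * (e₂ / d₀) := by
    field_simp
    linear_combination h
  linear_combination (u * v / (k.factorial * c) * p) * h'

theorem gosperTerm_add_two_eq_base {N : ℂ} (x : ℂ) {k : ℕ} (h₀ : poch (-1 - 3 * N) k ≠ 0)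
    (h₂ : poch (-1 - 3 * (N + 2)) k ≠ 0) :
    ((3 * N + 7) * (3 * N + 6) * (3 * N + 5)) * ((3 * N + 4) * (3 * N + 3) * (3 * N + 2)) *
        gosperTerm (N + 2) x k =
      ((3 * N + 7 - k) * (3 * N + 6 - k) * (3 * N + 5 - k)) *
        ((3 * N + 4 - k) * (3 * N + 3 - k) * (3 * N + 2 - k)) * gosperBase N x k := by
  have hd := poch_mul_shift_three (-1 - 3 * (N + 1)) k
  have hd' := poch_mul_shift_three (-1 - 3 * (N + 2)) k
  rw [show -1 - 3 * (N + 1) + 3 = -1 - 3 * N by ring] at hd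
  rw [show -1 - 3 * (N + 2) + 3 = -1 - 3 * (N + 1) by ring] at hd'
  unfold gosperTerm gosperBase
  generalize poch (-1 - 3 * (N + 2)) k = d₂ at *
  generalize poch (-1 - 3 * (N + 1)) k = d₁ at *
  generalize poch (-1 - 3 * N) k = d₀ at *
  have h : ((3 * N + 7) * (3 * N + 6) * (3 * N + 5)) *
        ((3 * N + 4) * (3 * N + 3) * (3 * N + 2)) / d₂ =
      ((3 * N + 7 - k) * (3 * N + 6 - k) * (3 * N + 5 - k)) *
        ((3 * N + 4 - k) * (3 * N + 3 - k) * (3 * N + 2 - k)) / d₀ := by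
    rw [div_eq_div_iff h₂ h₀]
    linear_combination ((3 * N + 7) * (3 * N + 6) * (3 * N + 5)) * hd +
      ((3 * N + 4 - k) * (3 * N + 3 - k) * (3 * N + 2 - k)) * hd'
  linear_combination (poch (3 * x) k * poch (1 - 3 * x) k * poch (-(N + 2)) k /
    (k.factorial * poch (1 / 2) k) * (3 / 4 : ℂ) ^ k) * h

theorem gosperBase_succ {N : ℂ} (x : ℂ) {k : ℕ} (h : poch (-1 - 3 * N) (k + 1) ≠ 0) :
    (k + 1) * (k + 1 / 2) * (k - 1 - 3 * N) * gosperBase N x (k + 1) =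
      3 / 4 * (3 * x + k) * (1 - 3 * x + k) * (k - N - 2) * gosperBase N x k := by
  have hk : (Nat.factorial k : ℂ) ≠ 0 := by exact_mod_cast k.factorial_ne_zero
  have hk' : (k + 1 : ℂ) ≠ 0 := by exact_mod_cast k.succ_ne_zero
  have hh := poch_half_ne_zero (k + 1)
  unfold gosperBase
  simp only [poch_succ, Nat.factorial_succ, pow_succ, Nat.cast_mul, Nat.cast_add,
    Nat.cast_one] at *
  obtain ⟨hd, hd'⟩ := mul_ne_zero_iff.mp h
  obtain ⟨hc, hc'⟩ := mul_ne_zero_iff.mp hh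
  generalize poch (-1 - 3 * N) k = d at *
  generalize poch (1 / 2) k = c at *
  rw [show (k : ℂ) + 1 / 2 = 1 / 2 + k by ring, show k - 1 - 3 * N = -1 - 3 * N + k by ring]
  generalize 1 / 2 + (k : ℂ) = r at *
  generalize -1 - 3 * N + (k : ℂ) = s at *
  field_simp
  ring

theorem sum_gosper_recurrence_aux {N x : ℂ} {M : ℕ} (hd : poch (-1 - 3 * N) M ≠ 0) {m : ℕ}
    (hm : m ≤ M) :
    ∑ k ∈ Finset.range (m + 1),
      (((3 * N + 7 - k) * (3 * N + 6 - k) * (3 * N + 5 - k)) *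
          ((3 * N + 4 - k) * (3 * N + 3 - k) * (3 * N + 2 - k)) / 729
        - ((N + 2) ^ 2 - x ^ 2 + ((N + 1) ^ 2 - (x - 1 / 3) ^ 2)) / 27 *
          ((N + 2 - k) * ((3 * N + 4 - k) * (3 * N + 3 - k) * (3 * N + 2 - k)))
        + ((N + 1) ^ 2 - x ^ 2) * ((N + 1) ^ 2 - (x - 1 / 3) ^ 2) *
          ((N + 1 - k) * (N + 2 - k))) * gosperBase N x k =
      3 / 4 * (N + 2 - m) * (3 * x + m) * (1 - 3 * x + m) * gosperCert N x (m + 1) *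
        gosperBase N x m := by
  induction m with
  | zero =>
    simp only [zero_add, Finset.sum_range_one, Nat.cast_zero, gosperCert]
    ring
  | succ m ih =>
    have hd' : poch (-1 - 3 * N) (m + 1) ≠ 0 := by
      refine poch_ne_zero fun j hj => ?_
      exact Finset.prod_ne_zero_iff.mp hd j (Finset.mem_range.mpr (by omega))
    have h := gosperBase_succ x hd'
    rw [Finset.sum_range_succ, ih (by omega)]
    simp only [gosperCert, Nat.cast_add, Nat.cast_one] at *
    linear_combination (4 * ((m + 1 : ℂ) ^ 3 - (9 * N + 11) * (m + 1) ^ 2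
      + (9 * N + 27 * x ^ 2 - 9 * x + 10) * (m + 1)
      + (-27 * N * x ^ 2 + 9 * N * x + 6 * N - 54 * x ^ 2 + 18 * x + 6)) / 729) * h

theorem sum_gosperTerm_extend {n m : ℕ} (x : ℂ) (h : n + 1 ≤ m) :
    ∑ k ∈ Finset.range m, gosperTerm n x k = ∑ k ∈ Finset.range (n + 1), gosperTerm n x k := by
  symm
  refine Finset.sum_subset (Finset.range_mono h) fun k _ hk => ?_
  have hk' : n < k := by simpa using hk
  simp [gosperTerm, poch_neg_natCast_eq_zero hk']

theorem sum_gosperTerm_recurrence {n : ℕ} (hn : 1 ≤ n) (x : ℂ) :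
    (n + 2 / 3) * (n + 4 / 3) * ((n + 5 / 3) * (n + 7 / 3)) *
        ∑ k ∈ Finset.range (n + 2 + 1), gosperTerm (n + 2 : ℕ) x k
      - (n + 2 / 3) * (n + 4 / 3) *
        (((n : ℂ) + 2) ^ 2 - x ^ 2 + (((n : ℂ) + 1) ^ 2 - (x - 1 / 3) ^ 2)) *
        ∑ k ∈ Finset.range (n + 1 + 1), gosperTerm (n + 1 : ℕ) x k
      + (((n : ℂ) + 1) ^ 2 - x ^ 2) * (((n : ℂ) + 1) ^ 2 - (x - 1 / 3) ^ 2) *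
        ∑ k ∈ Finset.range (n + 1), gosperTerm n x k = 0 := by
  have hd : ∀ i k : ℕ, k ≤ n + 2 → poch (-1 - 3 * ((n : ℂ) + i)) k ≠ 0 := fun i k hk => by
    have := poch_neg_natCast_ne_zero (m := 1 + 3 * (n + i)) (k := k) (by omega)
    convert this using 2
    push_cast
    ring
  have hd₀ : ∀ k ≤ n + 2, poch (-1 - 3 * (n : ℂ)) k ≠ 0 := fun k hk => by
    simpa using hd 0 k hk
  have key := sum_gosper_recurrence_aux (x := x) (hd₀ (n + 2) le_rfl) le_rfl
  have hz : (n : ℂ) + 2 - (n + 2 : ℕ) = 0 := by push_cast; ring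
  rw [hz] at key
  simp only [mul_zero, zero_mul] at key
  rw [← sum_gosperTerm_extend (n := n) x (show n + 1 ≤ n + 2 + 1 by omega),
    ← sum_gosperTerm_extend (n := n + 1) x (show n + 1 + 1 ≤ n + 2 + 1 by omega)]
  have h₁ : (n + 1 : ℂ) ≠ 0 := by exact_mod_cast (show n + 1 ≠ 0 by omega)
  have h₂ : (n + 2 : ℂ) ≠ 0 := by exact_mod_cast (show n + 2 ≠ 0 by omega)
  refine (mul_eq_zero.mp ?_).resolve_left (mul_ne_zero h₁ h₂)
  rw [← key, Finset.mul_sum, Finset.mul_sum, Finset.mul_sum, ← Finset.sum_sub_distrib,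
    ← Finset.sum_add_distrib, Finset.mul_sum]
  refine Finset.sum_congr rfl fun k hk => ?_
  have hk' : k ≤ n + 2 := by simpa [Nat.lt_succ_iff] using hk
  have e₀ := gosperTerm_eq_base n x k
  have e₁ := gosperTerm_add_one_eq_base x (hd₀ k hk') (by simpa using hd 1 k hk')
  have e₂ := gosperTerm_add_two_eq_base x (hd₀ k hk') (by simpa using hd 2 k hk')
  simp only [Nat.cast_add, Nat.cast_one, Nat.cast_ofNat]
  linear_combination (1 / 729) * e₂
    - (((n : ℂ) + 2) ^ 2 - x ^ 2 + (((n : ℂ) + 1) ^ 2 - (x - 1 / 3) ^ 2)) / 27 * e₁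
    + (((n : ℂ) + 1) ^ 2 - x ^ 2) * (((n : ℂ) + 1) ^ 2 - (x - 1 / 3) ^ 2) * e₀

theorem natCast_add_ne_zero (n : ℕ) {r : ℝ} (hr : 0 < r) : (n : ℂ) + r ≠ 0 := by
  have h : (n : ℝ) + r ≠ 0 := by positivity
  exact_mod_cast h

theorem poch_div_step (a b : ℂ) (n : ℕ) :
    (n + 2 / 3) * (n + 4 / 3) *
        (poch a (n + 1) * poch b (n + 1) / (poch (2 / 3) (n + 1) * poch (4 / 3) (n + 1))) =
      (a + n) * (b + n) * (poch a n * poch b n / (poch (2 / 3) n * poch (4 / 3) n)) := by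
  have h₁ := poch_two_thirds_ne_zero (n + 1)
  have h₂ := poch_four_thirds_ne_zero (n + 1)
  simp only [poch_succ] at *
  obtain ⟨h₁, h₁'⟩ := mul_ne_zero_iff.mp h₁
  obtain ⟨h₂, h₂'⟩ := mul_ne_zero_iff.mp h₂
  rw [add_comm (n : ℂ) (2 / 3), add_comm (n : ℂ) (4 / 3)]
  generalize 2 / 3 + (n : ℂ) = r at *
  generalize 4 / 3 + (n : ℂ) = s at *
  field_simp

theorem gosperClosed_recurrence (n : ℕ) (x : ℂ) :
    (n + 2 / 3) * (n + 4 / 3) * ((n + 5 / 3) * (n + 7 / 3)) * gosperClosed (n + 2) x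
      - (n + 2 / 3) * (n + 4 / 3) *
        (((n : ℂ) + 2) ^ 2 - x ^ 2 + (((n : ℂ) + 1) ^ 2 - (x - 1 / 3) ^ 2)) *
        gosperClosed (n + 1) x
      + (((n : ℂ) + 1) ^ 2 - x ^ 2) * (((n : ℂ) + 1) ^ 2 - (x - 1 / 3) ^ 2) *
        gosperClosed n x = 0 := by
  have a₀ := poch_div_step (1 + x) (1 - x) n
  have a₁ := poch_div_step (1 + x) (1 - x) (n + 1)
  have b₀ := poch_div_step (2 / 3 + x) (4 / 3 - x) n
  have b₁ := poch_div_step (2 / 3 + x) (4 / 3 - x) (n + 1)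
  simp only [add_assoc, Nat.reduceAdd, Nat.cast_add, Nat.cast_one] at a₁ b₁
  unfold gosperClosed
  linear_combination
    3 * x * ((n + 2 / 3) * (n + 4 / 3) * a₁ - ((n + 1) ^ 2 - (x - 1 / 3) ^ 2) * a₀)
    + (1 - 3 * x) * ((n + 2 / 3) * (n + 4 / 3) * b₁ - ((n + 1) ^ 2 - x ^ 2) * b₀)

theorem sum_gosperTerm_eq_closed (n : ℕ) (x : ℂ) :
    ∑ k ∈ Finset.range (n + 1), gosperTerm n x k = gosperClosed n x := by
  induction n using Nat.twoStepInduction with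
  | zero => simp [gosperTerm, gosperClosed, poch]
  | one =>
    simp [gosperTerm, gosperClosed, poch, Finset.sum_range_succ]
    ring
  | more n ih₀ ih₁ =>
    rcases Nat.eq_zero_or_pos n with rfl | hn
    · simp [gosperTerm, gosperClosed, poch, Finset.sum_range_succ, Finset.prod_range_succ]
      ring
    · have hs := sum_gosperTerm_recurrence hn x
      have hc := gosperClosed_recurrence n x
      rw [ih₀, ih₁] at hs
      have h₁ := natCast_add_ne_zero n (r := 2 / 3) (by norm_num)
      have h₂ := natCast_add_ne_zero n (r := 4 / 3) (by norm_num)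
      have h₃ := natCast_add_ne_zero n (r := 5 / 3) (by norm_num)
      have h₄ := natCast_add_ne_zero n (r := 7 / 3) (by norm_num)
      push_cast at h₁ h₂ h₃ h₄
      refine mul_left_cancel₀ (mul_ne_zero (mul_ne_zero h₁ h₂) (mul_ne_zero h₃ h₄)) ?_
      linear_combination hs - hc

theorem gosper_second_variant_ell_one (n : ℕ) (x : ℂ) :
    ∑ k ∈ Finset.range (n+1),
      (poch (3*x) k * poch (1 - 3*x) k * poch (-(n : ℂ)) k) /
        ((Nat.factorial k : ℂ) * poch (1/2) k * poch (-1 - 3*n : ℂ) k) * (3/4 : ℂ)^k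
      = 3*x * ((poch (1 + x) n * poch (1 - x) n) / (poch (2/3) n * poch (4/3) n))
        + (1 - 3*x) *
            ((poch (2/3 + x) n * poch (4/3 - x) n) / (poch (2/3) n * poch (4/3) n)) := by
  exact sum_gosperTerm_eq_closed n x
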